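/- For every positive integer j, the multiple zeta value with j repeated 2's satisfies ζ(2, 2, ..., 2) = π^{2j}/(2j+1)!. -/

import Mathlib

noncomputable def mzvTwoRep (j : ℕ) : ℝ :=
  ∑' f : {g : Fin j → ℕ+ // StrictAnti g}, ∏ i, (1 : ℝ) / ((f.1 i : ℕ) : ℝ) ^ 2

/-!
The number `ζ(2, …, 2)` with `k` arguments is the `k`-th elementary symmetric function of the family
`1 / n ^ 2`, so these numbers are the coefficients of the power series of `∏ n, (1 + z / n ^ 2)`.
For `z = -x ^ 2` Euler's product identifies this function with `sin (π x) / (π x)`, whose Taylor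
expansion, rewritten in powers of `z`, has coefficients `π ^ (2 * k) / (2 * k + 1)!`.
-/

open scoped Filter Nat Real Topology

/-- The `k`-th elementary symmetric function of a possibly infinite family `f`: the sum of the
products of `f` over all `k`-element sets of indices. As with any `tsum`, the value is `0` when
these products are not summable. -/
noncomputable def tsumEsymm {ι R : Type*} [CommSemiring R] [TopologicalSpace R]
    (f : ι → R) (k : ℕ) : R :=
  ∑' s : Set.powersetCard ι k, ∏ i ∈ s.1, f i

section StrictAnti

variable {α : Type*} [LinearOrder α]

/-- The bijection from strictly decreasing `k`-tuples to `k`-element sets that takes a tuple to the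
set of its entries. It reverses a tuple in order to reuse the description of `k`-element sets by
increasing tuples. -/
def strictAntiEquivPowersetCard (k : ℕ) :
    {g : Fin k → α // StrictAnti g} ≃ Set.powersetCard α k :=
  Equiv.trans
    { toFun g := OrderEmbedding.ofStrictMono (g.1 ∘ Fin.rev) (g.2.comp Fin.rev_strictAnti)
      invFun e := ⟨e ∘ Fin.rev, e.strictMono.comp_strictAnti Fin.rev_strictAnti⟩
      left_inv g := by ext; simp
      right_inv e := by ext; simp }
    Set.powersetCard.ofFinEmbEquiv

theorem prod_strictAntiEquivPowersetCard {M : Type*} [CommMonoid M] (f : α → M) {k : ℕ}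
    (g : {g : Fin k → α // StrictAnti g}) :
    ∏ a ∈ (strictAntiEquivPowersetCard k g).1, f a = ∏ i, f (g.1 i) := by
  simpa [strictAntiEquivPowersetCard, Set.powersetCard.ofFinEmbEquiv_apply] using
    Equiv.prod_comp Fin.revPerm fun i => f (g.1 i)

theorem tsum_strictAnti_prod {R : Type*} [CommSemiring R] [TopologicalSpace R]
    (f : α → R) (k : ℕ) :
    ∑' g : {g : Fin k → α // StrictAnti g}, ∏ i, f (g.1 i) = tsumEsymm f k := by
  simp only [tsumEsymm, ← (strictAntiEquivPowersetCard k).tsum_eq,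
    prod_strictAntiEquivPowersetCard]

end StrictAnti

section GeneratingFunction

variable {ι : Type*}

theorem tsumEsymm_const_mul {K : Type*} [Field K] [TopologicalSpace K] [IsTopologicalSemiring K]
    [T2Space K] (c : K) (f : ι → K) (k : ℕ) :
    tsumEsymm (fun i => c * f i) k = c ^ k * tsumEsymm f k := by
  rw [tsumEsymm, tsumEsymm, ← tsum_mul_left]
  refine tsum_congr fun s => ?_
  rw [Finset.prod_mul_distrib, Finset.prod_const, s.2]

theorem tsumEsymm_ofReal (f : ι → ℝ) (k : ℕ) :
    tsumEsymm (fun i => (f i : ℂ)) k = tsumEsymm f k := by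
  simp only [tsumEsymm, Complex.ofReal_tsum, Complex.ofReal_prod]

theorem hasSum_tsumEsymm {R : Type*} [NormedCommRing R] [NormOneClass R] [CompleteSpace R]
    {f : ι → R} (hf : Summable fun i => ‖f i‖) :
    HasSum (tsumEsymm f) (∏' i, (1 + f i)) := by
  have summable_prod : Summable fun s : Finset ι => ∏ i ∈ s, f i :=
    summable_finsetProd_of_summable_norm hf
  have hasSum_sigma : HasSum (fun s : Σ k, Set.powersetCard ι k => ∏ i ∈ s.2.1, f i)
      (∏' i, (1 + f i)) := by
    rw [tprod_one_add summable_prod]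
    exact (Equiv.sigmaFiberEquiv Finset.card).hasSum_iff.2 summable_prod.hasSum
  exact hasSum_sigma.sigma fun k => (hasSum_sigma.summable.sigma_factor k).hasSum

theorem hasSum_pow_mul_tsumEsymm {K : Type*} [NormedField K] [CompleteSpace K]
    {f : ι → K} (hf : Summable fun i => ‖f i‖) (z : K) :
    HasSum (fun k => z ^ k * tsumEsymm f k) (∏' i, (1 + z * f i)) := by
  have summable_mul : Summable fun i => ‖z * f i‖ := by
    simpa only [norm_mul] using hf.mul_left ‖z‖
  exact (hasSum_tsumEsymm summable_mul).congr_fun fun k => (tsumEsymm_const_mul z f k).symm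

end GeneratingFunction

theorem eq_of_eventually_hasSum_pow_mul {𝕜 : Type*} [NontriviallyNormedField 𝕜]
    {a b : ℕ → 𝕜} {F : 𝕜 → 𝕜}
    (ha : ∀ᶠ z in 𝓝 0, HasSum (fun k => z ^ k * a k) (F z))
    (hb : ∀ᶠ z in 𝓝 0, HasSum (fun k => z ^ k * b k) (F z)) : a = b := by
  have hasFPowerSeriesAt {c : ℕ → 𝕜}
      (hc : ∀ᶠ z in 𝓝 0, HasSum (fun k => z ^ k * c k) (F z)) :
      HasFPowerSeriesAt F (FormalMultilinearSeries.ofScalars 𝕜 c) 0 := by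
    simpa [hasFPowerSeriesAt_iff] using hc
  have series_eq := (hasFPowerSeriesAt ha).eq_formalMultilinearSeries (hasFPowerSeriesAt hb)
  ext k
  simpa using congrArg (fun p => p.coeff k) series_eq

section Sine

theorem hasSum_sin_div {x : ℂ} (hx : x ≠ 0) :
    HasSum (fun k : ℕ => (-x ^ 2) ^ k / (2 * k + 1)!) (Complex.sin x / x) := by
  refine ((Complex.hasSum_sin x).div_const x).congr_fun fun k => ?_
  rw [neg_pow, ← pow_mul]
  field_simp
  ring

theorem tprod_one_sub_sq_div_sq {x : ℂ} (hx : x ≠ 0) :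
    ∏' n : ℕ+, (1 - x ^ 2 / (n : ℂ) ^ 2) = Complex.sin (π * x) / (π * x) := by
  rw [tprod_pnat_eq_tprod_succ (f := fun n : ℕ => 1 - x ^ 2 / (n : ℂ) ^ 2)]
  have tprod_eq : ∏' n : ℕ, (1 + sineTerm x n) = Complex.sin (π * x) / (π * x) :=
    tendsto_nhds_unique (multipliable_sineTerm x).hasProd.tendsto_prod_nat
      (tendsto_euler_sin_prod' hx)
  simpa [sineTerm, neg_div, ← sub_eq_add_neg] using tprod_eq

theorem hasSum_tprod_one_add_div_sq (z : ℂ) :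
    HasSum (fun k : ℕ => z ^ k * (π ^ (2 * k) / (2 * k + 1)!))
      (∏' n : ℕ+, (1 + z * (1 / (n : ℂ) ^ 2))) := by
  obtain rfl | hz := eq_or_ne z 0
  · simpa using hasSum_single (f := fun k : ℕ => (0 : ℂ) ^ k * (π ^ (2 * k) / (2 * k + 1)!)) 0
      fun k hk => by simp [hk]
  obtain ⟨x, hx⟩ : ∃ x : ℂ, x ^ 2 = -z := IsAlgClosed.exists_pow_nat_eq (-z) two_pos
  obtain rfl : z = -x ^ 2 := by rw [hx, neg_neg]
  have x_ne_zero : x ≠ 0 := by simpa using hz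
  have pi_ne_zero : (π : ℂ) ≠ 0 := Complex.ofReal_ne_zero.2 Real.pi_ne_zero
  have tprod_eq : ∏' n : ℕ+, (1 + -x ^ 2 * (1 / (n : ℂ) ^ 2)) =
      Complex.sin (π * x) / (π * x) := by
    rw [← tprod_one_sub_sq_div_sq x_ne_zero]
    exact tprod_congr fun n => by ring
  rw [tprod_eq]
  refine (hasSum_sin_div (mul_ne_zero pi_ne_zero x_ne_zero)).congr_fun fun k => ?_
  ring

end Sine

theorem mzvTwoRep_eq_tsumEsymm (j : ℕ) :
    mzvTwoRep j = tsumEsymm (fun n : ℕ+ => 1 / (n : ℝ) ^ 2) j :=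
  tsum_strictAnti_prod (fun n : ℕ+ => 1 / (n : ℝ) ^ 2) j

theorem hasSum_pow_mul_mzvTwoRep (z : ℂ) :
    HasSum (fun k => z ^ k * (mzvTwoRep k : ℂ)) (∏' n : ℕ+, (1 + z * (1 / (n : ℂ) ^ 2))) := by
  have summable_inv_sq : Summable fun n : ℕ+ => ‖1 / (n : ℂ) ^ 2‖ := by
    simpa [Function.comp_def] using
      (Real.summable_one_div_nat_pow.2 one_lt_two).comp_injective PNat.coe_injective
  simpa [mzvTwoRep_eq_tsumEsymm, ← tsumEsymm_ofReal] using
    hasSum_pow_mul_tsumEsymm summable_inv_sq z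

theorem mzv_two_rep_eq (j : ℕ) (hj : 0 < j) :
    mzvTwoRep j = Real.pi ^ (2 * j) / (Nat.factorial (2 * j + 1)) := by
  have coeff_eq : (fun k => (mzvTwoRep k : ℂ)) = fun k => (π : ℂ) ^ (2 * k) / (2 * k + 1)! :=
    eq_of_eventually_hasSum_pow_mul (.of_forall hasSum_pow_mul_mzvTwoRep)
      (.of_forall hasSum_tprod_one_add_div_sq)
  exact_mod_cast congrFun coeff_eq j
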